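/- arXiv:1412.5507 — 2 statements merged into one kernel-verified Lean document; each statement's English description precedes it below -/
import Mathlib

section
/- (Girard's theorem for tempolateral de Sitter triangles.) Let p₁, p₂, p₃ ∈ S₁² be linearly independent with B(pⱼ,p_k) > 1 for all j ≠ k (all edges timelike, each pair of vertices on the same hyperbola branch), and let Vⱼᵏ = (p_k − B(pⱼ,p_k)pⱼ)/√(B(pⱼ,p_k)² − 1) be the unit timelike tangent vector at vertex pⱼ pointing toward p_k. Assume p₁ is the vertex at which the two tangent vectors lie in different time cones, i.e., B(V₁², V₁³) > 1, B(V₂¹, V₂³) < −1, and B(V₃¹, V₃²) < −1. Then with interior angles θ₂₃ = arcosh(B(V₁²,V₁³)), θ₁₃ = arcosh(−B(V₂¹,V₂³)), θ₁₂ = arcosh(−B(V₃¹,V₃²)), the quantity θ₂₃ − θ₁₂ − θ₁₃ (which is the area of the triangle) is strictly positive: arcosh(B(V₁²,V₁³)) − arcosh(−B(V₂¹,V₂³)) − arcosh(−B(V₃¹,V₃²)) > 0. -/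
/-!
Write `a = B p₂ p₃`, `b = B p₁ p₃`, `c = B p₁ p₂`. The hyperbolic law of cosines says that the
three products of tangent vectors are `(a - b c) / √((b² - 1)(c² - 1))` and its cyclic analogues
(`B_Vtime`). Let `D = a² + b² + c² - 2abc - 1`, minus the Gram determinant of the vertices; it is
positive because the first product exceeds `1`. If `x, y, z` are the angles at `p₁, p₂, p₃`, then
`sinh y` and `sinh z` are `√D` divided by the same denominators as `cosh y`, `cosh z`, so the
addition formula gives
`cosh x - cosh (y + z) = (a - 1) D / ((a² - 1) √((b² - 1)(c² - 1))) > 0`,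
and hence `y + z < x`.
-/

noncomputable section

/-- The Lorentzian bilinear form on Minkowski 3-space. -/
def B (u v : Fin 3 → ℝ) : ℝ := u 0 * v 0 + u 1 * v 1 - u 2 * v 2

/-- The de Sitter plane. -/
def deSitter : Set (Fin 3 → ℝ) := {x | B x x = 1}

/-- The real inverse hyperbolic cosine. -/
def arcosh (x : ℝ) : ℝ := Real.log (x + Real.sqrt (x ^ 2 - 1))

/-- Unit tangent vector at the point `p` of the de Sitter plane pointing toward `q`,
for a timelike edge (`B p q > 1`). -/
def Vtime (p q : Fin 3 → ℝ) : Fin 3 → ℝ :=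
  (Real.sqrt ((B p q) ^ 2 - 1))⁻¹ • (q - B p q • p)

lemma B_comm (u v : Fin 3 → ℝ) : B u v = B v u := by
  simp only [B]; ring

/-- The hyperbolic law of cosines at the vertex `p`. -/
lemma B_Vtime (p q r : Fin 3 → ℝ) (hp : B p p = 1) :
    B (Vtime p q) (Vtime p r) =
      (B q r - B p q * B p r) / (√(B p q ^ 2 - 1) * √(B p r ^ 2 - 1)) := by
  have h : B (q - B p q • p) (r - B p r • p) = B q r - B p q * B p r := by
    have h' : B (q - B p q • p) (r - B p r • p)
        = B q r - B p r * B p q - B p q * B p r + B p q * B p r * B p p := by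
      simp only [B, Pi.sub_apply, Pi.smul_apply, smul_eq_mul]; ring
    rw [h', hp]; ring
  have h2 : ∀ (s t : ℝ) (u v : Fin 3 → ℝ), B (s • u) (t • v) = s * t * B u v := by
    intro s t u v
    simp only [B, Pi.smul_apply, smul_eq_mul]; ring
  rw [Vtime, Vtime, h2, h, div_eq_mul_inv, mul_inv]; ring

/-- The strict angle inequality, in terms of the products `a, b, c` of the vertices and the
hyperbolic sines `s, t, u` of the side lengths. -/
lemma arcosh_add_lt {a b c s t u : ℝ} (ha : 1 < a) (hs : 0 < s) (ht : 0 < t) (hu : 0 < u)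
    (hs2 : s ^ 2 = a ^ 2 - 1) (ht2 : t ^ 2 = b ^ 2 - 1) (hu2 : u ^ 2 = c ^ 2 - 1)
    (h1 : 1 < (a - b * c) / (u * t)) (h2 : 1 < (a * c - b) / (u * s))
    (h3 : 1 < (a * b - c) / (t * s)) :
    Real.arcosh ((a * c - b) / (u * s)) + Real.arcosh ((a * b - c) / (t * s))
      < Real.arcosh ((a - b * c) / (u * t)) := by
  set D := a ^ 2 + b ^ 2 + c ^ 2 - 2 * a * b * c - 1 with hD
  have hDpos : 0 < D := by
    rw [one_lt_div (by positivity)] at h1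
    have : (u * t) ^ 2 < (a - b * c) ^ 2 := by gcongr
    rw [mul_pow, hu2, ht2] at this
    linarith
  have e2 : √(((a * c - b) / (u * s)) ^ 2 - 1) = √D / (u * s) := by
    rw [← Real.sqrt_sq (show 0 ≤ u * s by positivity), ← Real.sqrt_div hDpos.le,
      Real.sqrt_sq (by positivity)]
    congr 1
    field_simp
    rw [hs2, hu2, hD]; ring
  have e3 : √(((a * b - c) / (t * s)) ^ 2 - 1) = √D / (t * s) := by
    rw [← Real.sqrt_sq (show 0 ≤ t * s by positivity), ← Real.sqrt_div hDpos.le,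
      Real.sqrt_sq (by positivity)]
    congr 1
    field_simp
    rw [hs2, ht2, hD]; ring
  have hcosh : Real.cosh (Real.arcosh ((a * c - b) / (u * s)) + Real.arcosh ((a * b - c) / (t * s)))
      < (a - b * c) / (u * t) := by
    rw [Real.cosh_add, Real.cosh_arcosh h2.le, Real.cosh_arcosh h3.le, Real.sinh_arcosh h2.le,
      Real.sinh_arcosh h3.le, e2, e3]
    have hsq : √D * √D = D := Real.mul_self_sqrt hDpos.le
    have e : (a * c - b) / (u * s) * ((a * b - c) / (t * s)) + √D / (u * s) * (√D / (t * s))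
        = ((a * c - b) * (a * b - c) + D) / (s ^ 2 * (u * t)) := by
      rw [div_mul_div_comm, div_mul_div_comm, hsq, ← add_div]
      congr 1; ring
    have e' : (a - b * c) / (u * t) = (s ^ 2 * (a - b * c)) / (s ^ 2 * (u * t)) := by
      field_simp
    rw [e, e']
    apply div_lt_div_of_pos_right _ (by positivity)
    have := mul_pos (sub_pos.2 ha) hDpos
    rw [hs2]
    rw [hD] at this ⊢
    linear_combination this
  have := (Real.arcosh_lt_arcosh (Real.cosh_pos _) (by linarith)).2 hcosh
  rwa [Real.arcosh_cosh (add_nonneg (Real.arcosh_nonneg h2.le) (Real.arcosh_nonneg h3.le))] at this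

theorem stmt14 (p₁ p₂ p₃ : Fin 3 → ℝ)
    (hp₁ : p₁ ∈ deSitter) (hp₂ : p₂ ∈ deSitter) (hp₃ : p₃ ∈ deSitter)
    (hind : LinearIndependent ℝ ![p₁, p₂, p₃])
    (h12 : 1 < B p₁ p₂) (h13 : 1 < B p₁ p₃) (h23 : 1 < B p₂ p₃)
    (hc1 : 1 < B (Vtime p₁ p₂) (Vtime p₁ p₃))
    (hc2 : B (Vtime p₂ p₁) (Vtime p₂ p₃) < -1)
    (hc3 : B (Vtime p₃ p₁) (Vtime p₃ p₂) < -1) :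
    0 < arcosh (B (Vtime p₁ p₂) (Vtime p₁ p₃))
        - arcosh (-(B (Vtime p₂ p₁) (Vtime p₂ p₃)))
        - arcosh (-(B (Vtime p₃ p₁) (Vtime p₃ p₂))) := by
  have har : arcosh = Real.arcosh := rfl
  rw [har]
  have key : ∀ x : ℝ, 1 < x → 0 < √(x ^ 2 - 1) ∧ √(x ^ 2 - 1) ^ 2 = x ^ 2 - 1 := by
    intro x hx
    have : 0 < x ^ 2 - 1 := by nlinarith
    exact ⟨Real.sqrt_pos.2 this, Real.sq_sqrt this.le⟩
  obtain ⟨hs, hs2⟩ := key _ h23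
  obtain ⟨ht, ht2⟩ := key _ h13
  obtain ⟨hu, hu2⟩ := key _ h12
  have e2 : -B (Vtime p₂ p₁) (Vtime p₂ p₃) = (B p₂ p₃ * B p₁ p₂ - B p₁ p₃) /
      (√(B p₁ p₂ ^ 2 - 1) * √(B p₂ p₃ ^ 2 - 1)) := by
    rw [B_Vtime _ _ _ hp₂, B_comm p₂ p₁]; ring
  have e3 : -B (Vtime p₃ p₁) (Vtime p₃ p₂) = (B p₂ p₃ * B p₁ p₃ - B p₁ p₂) /
      (√(B p₁ p₃ ^ 2 - 1) * √(B p₂ p₃ ^ 2 - 1)) := by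
    rw [B_Vtime _ _ _ hp₃, B_comm p₃ p₁, B_comm p₃ p₂]; ring
  rw [← neg_lt_neg_iff, neg_neg, e2] at hc2
  rw [← neg_lt_neg_iff, neg_neg, e3] at hc3
  have e1 : B (Vtime p₁ p₂) (Vtime p₁ p₃) = (B p₂ p₃ - B p₁ p₃ * B p₁ p₂) /
      (√(B p₁ p₂ ^ 2 - 1) * √(B p₁ p₃ ^ 2 - 1)) := by
    rw [B_Vtime _ _ _ hp₁]; ring
  rw [e1] at hc1
  rw [e1, e2, e3]
  have := arcosh_add_lt h23 hs ht hu hs2 ht2 hu2 hc1 hc2 hc3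
  linarith
end
end

section
/- Let p₁, p₂, p₃ ∈ S₁² be linearly independent vertices of a chorosceles de Sitter triangle: |B(p₁,p₂)| < 1, |B(p₁,p₃)| < 1 (the two edges through p₁ are spacelike), and B(p₂,p₃) > 1 (the edge opposite p₁ is timelike). Let V₁² = (p₂ − B(p₁,p₂)p₁)/√(1 − B(p₁,p₂)²) and V₁³ = (p₃ − B(p₁,p₃)p₁)/√(1 − B(p₁,p₃)²) be the unit spacelike tangent vectors at p₁ toward p₂ and p₃. Then B(V₁², V₁³) > 1 (equivalently, the unit outer normals to the two edge planes through p₁ are timelike vectors lying in different time cones). -/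
/-!
Write `a = B p₁ p₂`, `b = B p₁ p₃`, `c = B p₂ p₃`. The Gram determinant of `p₁, p₂, p₃` is
`(1 - a²)(1 - b²) - (c - ab)²`. Since `B` has signature `(2, 1)`, it also equals `-det² < 0`,
where `det` is the determinant of the coordinate matrix, nonzero by linear independence. Hence
`(c - ab)² > (1 - a²)(1 - b²)`, and `c > 1 > ab` makes `c - ab` positive, so that
`B (Vspace p₁ p₂) (Vspace p₁ p₃) = (c - ab) / √((1 - a²)(1 - b²)) > 1`.
-/

noncomputable section

/-- Unit tangent vector at the point `p` of the de Sitter plane pointing toward `q`,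
for a spacelike edge (`|B p q| < 1`). -/
def Vspace (p q : Fin 3 → ℝ) : Fin 3 → ℝ :=
  (Real.sqrt (1 - (B p q) ^ 2))⁻¹ • (q - B p q • p)

/-- The Gram determinant of three vectors for `B` is `-1` times the squared determinant of their
coordinates, because the matrix of `B` has determinant `-1`. -/
lemma gram_eq_neg_det_sq (p q r : Fin 3 → ℝ) :
    B p p * B q q * B r r + 2 * (B p q * B p r * B q r)
      - B p p * B q r ^ 2 - B q q * B p r ^ 2 - B r r * B p q ^ 2
      = -(Matrix.of ![p, q, r]).det ^ 2 := by
  simp [Matrix.det_fin_three, B]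
  ring

lemma B_Vspace (p q r : Fin 3 → ℝ) (hp : B p p = 1) :
    B (Vspace p q) (Vspace p r) =
      (B q r - B p q * B p r) / (√(1 - B p q ^ 2) * √(1 - B p r ^ 2)) := by
  have expand : ∀ s t x y : ℝ, B (s • (q - x • p)) (t • (r - y • p)) =
      s * t * (B q r - y * B p q - x * B p r + x * y * B p p) := by
    intro s t x y
    simp only [B, Pi.smul_apply, Pi.sub_apply, smul_eq_mul]
    ring
  rw [Vspace, Vspace, expand, hp, div_eq_mul_inv, mul_inv]
  ring

theorem stmt15 (p₁ p₂ p₃ : Fin 3 → ℝ)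
    (hp₁ : p₁ ∈ deSitter) (hp₂ : p₂ ∈ deSitter) (hp₃ : p₃ ∈ deSitter)
    (hind : LinearIndependent ℝ ![p₁, p₂, p₃])
    (h12 : |B p₁ p₂| < 1) (h13 : |B p₁ p₃| < 1) (h23 : 1 < B p₂ p₃) :
    1 < B (Vspace p₁ p₂) (Vspace p₁ p₃) := by
  have h1 : B p₁ p₁ = 1 := hp₁
  have h2 : B p₂ p₂ = 1 := hp₂
  have h3 : B p₃ p₃ = 1 := hp₃
  have hdet : (Matrix.of ![p₁, p₂, p₃]).det ≠ 0 := by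
    have hu : IsUnit (Matrix.of ![p₁, p₂, p₃]) :=
      Matrix.linearIndependent_rows_iff_isUnit.mp hind
    exact ((Matrix.isUnit_iff_isUnit_det _).mp hu).ne_zero
  have hdet_sq : 0 < (Matrix.of ![p₁, p₂, p₃]).det ^ 2 := by positivity
  have hgram := gram_eq_neg_det_sq p₁ p₂ p₃
  rw [h1, h2, h3] at hgram
  have ha : 0 < 1 - B p₁ p₂ ^ 2 := sub_pos.mpr ((sq_lt_one_iff_abs_lt_one _).mpr h12)
  have hb : 0 < 1 - B p₁ p₃ ^ 2 := sub_pos.mpr ((sq_lt_one_iff_abs_lt_one _).mpr h13)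
  have hab : 0 < B p₂ p₃ - B p₁ p₂ * B p₁ p₃ := by
    nlinarith [sq_nonneg (B p₁ p₂ - B p₁ p₃)]
  rw [B_Vspace p₁ p₂ p₃ h1, one_lt_div (by positivity), ← Real.sqrt_mul ha.le,
    Real.sqrt_lt' hab]
  linarith
end
end
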